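/- In 𝔽₂[t₁,…,t₅], let Q be the product of ∏_{1≤j<k≤5}(1 + t_j + t_k) and ∏_{|S|=4, S⊆{1,…,5}}(1 + Σ_{i∈S} t_i). Then the homogeneous component of Q of degree 8 is congruent to e₃e₅ + e₄² + e₂⁴ modulo the ideal generated by e₁. -/

import Mathlib

/-!
The factors of `Q` are the `1 + ∑ i ∈ S, tᵢ` with `S` of even size (the factor of `S = ∅` is `1`).
In characteristic 2 these sixteen sums are exactly the elements of the `𝔽₂`-span `V` of
`t₁ + t₅, …, t₄ + t₅`, so the degree-8 component of `Q` is the coefficient of `X⁸` in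
`L_V = ∏_{v ∈ V} (X + v)`, a Dickson invariant. The polynomial `L_V` is additive, hence adjoining a
vector `a` to `V` replaces `L_V` by `L_V² + L_V(a) L_V`. This recursion computes the coefficient of
`X⁸` without expanding sixteen factors, and for `e₁ = 0` the outcome is `e₃e₅ + e₄² + e₂⁴`.
-/

open MvPolynomial Finset

/-- The `i`-th elementary symmetric polynomial in `𝔽₂[t₁,…,t₅]`. -/
noncomputable def e (i : ℕ) : MvPolynomial (Fin 5) (ZMod 2) :=
  esymm (Fin 5) (ZMod 2) i

/-- `Q`: the product of `∏_{1≤j<k≤5}(1 + t_j + t_k)` and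
`∏_{|S|=4}(1 + Σ_{i∈S} t_i)` in `𝔽₂[t₁,…,t₅]`, representing the mod 2 total
Chern class of `1 ⊕ λ² ⊕ λ⁴` of `SU(5)`. -/
noncomputable def Q : MvPolynomial (Fin 5) (ZMod 2) :=
  (∏ p ∈ univ.filter (fun p : Fin 5 × Fin 5 => p.1 < p.2), (1 + X p.1 + X p.2)) *
  ∏ s ∈ (univ : Finset (Fin 5)).powersetCard 4, (1 + ∑ i ∈ s, X i)

section Esymm

variable {R : Type*} [CommSemiring R]

lemma multiset_esymm_zero_right (s : Multiset R) : s.esymm 0 = 1 := by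
  simp [Multiset.esymm]

lemma multiset_esymm_zero_succ (n : ℕ) : (0 : Multiset R).esymm (n + 1) = 0 := by
  rw [Multiset.esymm, Multiset.powersetCard_eq_empty _ (by simp), Multiset.map_zero,
    Multiset.sum_zero]

lemma multiset_esymm_cons_succ (a : R) (s : Multiset R) (n : ℕ) :
    (a ::ₘ s).esymm (n + 1) = s.esymm (n + 1) + a * s.esymm n := by
  simp [Multiset.esymm, Multiset.powersetCard_cons, Multiset.sum_map_mul_left]

end Esymm

section Homogeneous

variable {σ κ R : Type*} [CommSemiring R]

lemma homogeneousComponent_prod_one_add (s : Finset κ) (f : κ → MvPolynomial σ R)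
    (hf : ∀ i ∈ s, (f i).IsHomogeneous 1) (n : ℕ) :
    homogeneousComponent n (∏ i ∈ s, (1 + f i)) = ∑ t ∈ s.powersetCard n, ∏ i ∈ t, f i := by
  have homogeneous_prod : ∀ t ∈ s.powerset, (∏ i ∈ t, f i).IsHomogeneous #t := fun t ht => by
    simpa using IsHomogeneous.prod t f (fun _ => 1) fun i hi => hf i (mem_powerset.1 ht hi)
  rw [prod_one_add, map_sum, powersetCard_eq_filter, sum_filter]
  refine sum_congr rfl fun t ht => ?_
  rw [homogeneousComponent_of_mem (homogeneous_prod t ht)]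
  simp only [eq_comm]

lemma homogeneousComponent_prod_one_add_eq_coeff (s : Finset κ) (f : κ → MvPolynomial σ R)
    (hf : ∀ i ∈ s, (f i).IsHomogeneous 1) {n : ℕ} (hn : n ≤ #s) :
    homogeneousComponent n (∏ i ∈ s, (1 + f i)) =
      (∏ i ∈ s, (Polynomial.X + Polynomial.C (f i))).coeff (#s - n) := by
  rw [homogeneousComponent_prod_one_add s f hf, prod_X_add_C_coeff s f (Nat.sub_le _ _),
    Nat.sub_sub_self hn]

end Homogeneous

lemma prod_even_subsets_insert {ι R M : Type*} [DecidableEq ι] [Semiring R] [CharP R 2]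
    [CommMonoid M] {s : Finset ι} {a : ι} (ha : a ∉ s) (t : ι → R) (f : R → M) :
    ∏ u ∈ (insert a s).powerset with Even #u, f (∑ i ∈ u, t i) =
      ∏ u ∈ s.powerset, f (∑ i ∈ u, (t i + t a)) := by
  rw [prod_filter, prod_powerset_insert ha, ← prod_mul_distrib]
  refine prod_congr rfl fun u hu => ?_
  have hau : a ∉ u := fun hau => ha (mem_powerset.1 hu hau)
  rw [card_insert_of_notMem hau, sum_insert hau, sum_add_distrib, sum_const, nsmul_eq_mul]
  by_cases even_card : Even #u
  · simp [even_card, Nat.even_add_one, CharTwo.natCast_eq_ite]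
  · simp [even_card, Nat.even_add_one, CharTwo.natCast_eq_ite, add_comm]

lemma prod_lt_pairs_eq_prod_powersetCard_two {α M : Type*} [Fintype α] [LinearOrder α]
    [CommMonoid M] (f : Finset α → M) :
    ∏ p : α × α with p.1 < p.2, f {p.1, p.2} = ∏ s ∈ univ.powersetCard 2, f s := by
  refine prod_bij (fun p _ => {p.1, p.2}) ?_ ?_ ?_ fun _ _ => rfl
  · intro p hp
    simp only [mem_filter_univ] at hp
    simp [mem_powersetCard, card_pair hp.ne]
  · rintro ⟨a, b⟩ hp ⟨c, d⟩ hq h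
    simp only [mem_filter_univ] at hp hq
    have mem_iff (x : α) : x = a ∨ x = b ↔ x = c ∨ x = d := by simpa using Finset.ext_iff.1 h x
    grind [mem_iff a, mem_iff b, mem_iff c, mem_iff d]
  · intro s hs
    obtain ⟨a, b, hab, rfl⟩ := card_eq_two.1 (mem_powersetCard.1 hs).2
    rcases hab.lt_or_gt with hab | hab
    · exact ⟨(a, b), by simpa using hab, rfl⟩
    · exact ⟨(b, a), by simpa using hab, pair_comm b a⟩

/-- The product of the linear factors `X + ∑ i ∈ t, y i` over all `t ⊆ s`. In characteristic 2 and
for linearly independent `y`, its roots are the vectors of the `𝔽₂`-span of `y` on `s`, and its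
coefficients are the Dickson invariants of that span. -/
noncomputable def spanPoly {ι R : Type*} [CommSemiring R] (s : Finset ι) (y : ι → R) :
    Polynomial R :=
  ∏ t ∈ s.powerset, (Polynomial.X + Polynomial.C (∑ i ∈ t, y i))

section Basic

variable {ι R : Type*} [CommSemiring R] (s : Finset ι) (y : ι → R)

lemma spanPoly_empty : spanPoly ∅ y = Polynomial.X := by
  simp [spanPoly]

lemma monic_spanPoly : (spanPoly s y).Monic :=
  Polynomial.monic_prod_of_monic _ _ fun _ _ => Polynomial.monic_X_add_C _

lemma natDegree_spanPoly [Nontrivial R] : (spanPoly s y).natDegree = 2 ^ #s := by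
  rw [spanPoly, Polynomial.natDegree_prod_of_monic _ _ fun _ _ => Polynomial.monic_X_add_C _]
  simp [-map_sum]

lemma coeff_two_pow_card_spanPoly : (spanPoly s y).coeff (2 ^ #s) = 1 := by
  nontriviality R
  rw [← natDegree_spanPoly s y]
  exact (monic_spanPoly s y).coeff_natDegree

lemma map_spanPoly {A : Type*} [CommSemiring A] (f : R →+* A) :
    (spanPoly s y).map f = spanPoly s (fun i => f (y i)) := by
  simp [spanPoly, Polynomial.map_prod, -map_sum, ← map_sum f]

lemma spanPoly_insert_eq_mul_comp [DecidableEq ι] {s : Finset ι} {a : ι} (ha : a ∉ s) :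
    spanPoly (insert a s) y =
      spanPoly s y * (spanPoly s y).comp (Polynomial.X + Polynomial.C (y a)) := by
  simp only [spanPoly, prod_powerset_insert ha, Polynomial.prod_comp]
  congr 1
  refine prod_congr rfl fun t ht => ?_
  rw [sum_insert fun hat => ha (mem_powerset.1 ht hat)]
  simp [add_assoc]

lemma spanPoly_singleton (i : ι) :
    spanPoly {i} y = Polynomial.X * (Polynomial.X + Polynomial.C (y i)) := by
  classical
  rw [← insert_empty_eq, spanPoly_insert_eq_mul_comp y (notMem_empty i), spanPoly_empty,
    Polynomial.X_comp]

lemma eval_spanPoly_pair [DecidableEq ι] {i j : ι} (hij : i ≠ j) (x : R) :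
    (spanPoly {i, j} y).eval x = x * (x + y i) * (x + y j) * (x + y i + y j) := by
  rw [spanPoly_insert_eq_mul_comp y (notMem_singleton.2 hij), spanPoly_singleton]
  simp only [Polynomial.eval_mul, Polynomial.eval_comp, Polynomial.eval_add, Polynomial.eval_X,
    Polynomial.eval_C]
  ring

end Basic

section CharTwo

variable {ι R : Type*} [CommRing R] [CharP R 2]

lemma spanPoly_comp_X_add_C (s : Finset ι) (y : ι → R) (r : R) :
    (spanPoly s y).comp (Polynomial.X + Polynomial.C r) =
      spanPoly s y + Polynomial.C ((spanPoly s y).eval r) := by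
  classical
  induction s using Finset.induction_on generalizing r with
  | empty => simp [spanPoly_empty]
  | insert a s ha ih =>
    have two_eq_zero : (2 : Polynomial R) = 0 := CharTwo.two_eq_zero
    rw [spanPoly_insert_eq_mul_comp y ha, ih]
    simp only [Polynomial.mul_comp, Polynomial.add_comp, Polynomial.C_comp, ih,
      Polynomial.eval_mul, Polynomial.eval_add, Polynomial.eval_C, map_mul, map_add]
    linear_combination
      spanPoly s y * Polynomial.C ((spanPoly s y).eval r) * two_eq_zero

variable [DecidableEq ι] {s : Finset ι} {a : ι}

lemma spanPoly_insert (y : ι → R) (ha : a ∉ s) :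
    spanPoly (insert a s) y =
      spanPoly s y ^ 2 + Polynomial.C ((spanPoly s y).eval (y a)) * spanPoly s y := by
  rw [spanPoly_insert_eq_mul_comp y ha, spanPoly_comp_X_add_C]
  ring

lemma coeff_two_mul_spanPoly_insert (y : ι → R) (ha : a ∉ s) (k : ℕ) :
    (spanPoly (insert a s) y).coeff (2 * k) =
      (spanPoly s y).coeff k ^ 2 + (spanPoly s y).eval (y a) * (spanPoly s y).coeff (2 * k) := by
  rw [spanPoly_insert y ha, Polynomial.coeff_add, Polynomial.coeff_C_mul,
    ← Polynomial.map_frobenius_expand, Polynomial.coeff_map, mul_comm 2 k,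
    Polynomial.coeff_expand_mul two_pos, frobenius_def]

lemma coeff_two_pow_spanPoly_insert (y : ι → R) (ha : a ∉ s) {n : ℕ} (hs : #s = n + 1) :
    (spanPoly (insert a s) y).coeff (2 ^ (n + 1)) =
      (spanPoly s y).coeff (2 ^ n) ^ 2 + (spanPoly s y).eval (y a) := by
  have leading : (spanPoly s y).coeff (2 * 2 ^ n) = 1 := by
    rw [← pow_succ', ← hs, coeff_two_pow_card_spanPoly]
  rw [pow_succ', coeff_two_mul_spanPoly_insert y ha, leading, mul_one]

lemma coeff_two_spanPoly_pair (y : ι → R) {i j : ι} (hij : i ≠ j) :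
    (spanPoly {i, j} y).coeff 2 = y i ^ 2 + y i * y j + y j ^ 2 := by
  have coeff_one : (spanPoly {j} y).coeff 1 = y j := by
    simp [spanPoly_singleton]
  have eval_singleton : (spanPoly {j} y).eval (y i) = y i * (y i + y j) := by
    simp [spanPoly_singleton]
  calc (spanPoly {i, j} y).coeff 2
      = (spanPoly {j} y).coeff 1 ^ 2 + (spanPoly {j} y).eval (y i) :=
        coeff_two_pow_spanPoly_insert y (notMem_singleton.2 hij) (n := 0) (card_singleton j)
    _ = y i ^ 2 + y i * y j + y j ^ 2 := by
        rw [coeff_one, eval_singleton]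
        ring

lemma coeff_eight_spanPoly_quadruple (y : ι → R) {i j k l : ι} (hi : i ∉ ({j, k, l} : Finset ι))
    (hj : j ∉ ({k, l} : Finset ι)) (hkl : k ≠ l) :
    (spanPoly {i, j, k, l} y).coeff 8 =
      (y k ^ 2 + y k * y l + y l ^ 2) ^ 4 + (spanPoly {k, l} y).eval (y i) ^ 2 +
        (spanPoly {k, l} y).eval (y i) * (spanPoly {k, l} y).eval (y j) +
        (spanPoly {k, l} y).eval (y j) ^ 2 := by
  have card_pair : #{k, l} = 1 + 1 := Finset.card_pair hkl
  have card_triple : #{j, k, l} = 2 + 1 := by rw [card_insert_of_notMem hj, card_pair]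
  have coeff_four : (spanPoly {j, k, l} y).coeff 4 =
      (y k ^ 2 + y k * y l + y l ^ 2) ^ 2 + (spanPoly {k, l} y).eval (y j) := by
    rw [← coeff_two_spanPoly_pair y hkl]
    exact coeff_two_pow_spanPoly_insert y hj card_pair
  have eval_triple : (spanPoly {j, k, l} y).eval (y i) = (spanPoly {k, l} y).eval (y i) ^ 2 +
      (spanPoly {k, l} y).eval (y j) * (spanPoly {k, l} y).eval (y i) := by
    simp [spanPoly_insert y hj]
  calc (spanPoly {i, j, k, l} y).coeff 8
      = (spanPoly {j, k, l} y).coeff 4 ^ 2 + (spanPoly {j, k, l} y).eval (y i) :=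
        coeff_two_pow_spanPoly_insert y hi card_triple
    _ = (y k ^ 2 + y k * y l + y l ^ 2) ^ 4 + (spanPoly {k, l} y).eval (y i) ^ 2 +
          (spanPoly {k, l} y).eval (y i) * (spanPoly {k, l} y).eval (y j) +
          (spanPoly {k, l} y).eval (y j) ^ 2 := by
        rw [coeff_four, eval_triple, CharTwo.add_sq]
        ring

lemma coeff_eight_spanPoly_eq_esymm (t : Fin 5 → R) (ht : ∑ i, t i = 0) :
    (spanPoly {0, 1, 2, 3} (fun i => t i + t 4)).coeff 8 =
      (univ.val.map t).esymm 3 * (univ.val.map t).esymm 5 + (univ.val.map t).esymm 4 ^ 2 +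
        (univ.val.map t).esymm 2 ^ 4 := by
  have t_four : t 4 = t 0 + t 1 + t 2 + t 3 := by
    rw [Fin.sum_univ_five] at ht
    exact (CharTwo.add_eq_zero.1 ht).symm
  have map_univ : univ.val.map t = {t 0, t 1, t 2, t 3, t 4} := rfl
  rw [coeff_eight_spanPoly_quadruple _ (by decide) (by decide) (by decide),
    eval_spanPoly_pair _ (by decide), eval_spanPoly_pair _ (by decide), map_univ]
  simp only [Multiset.insert_eq_cons, ← Multiset.cons_zero, multiset_esymm_cons_succ,
    multiset_esymm_zero_succ, multiset_esymm_zero_right, t_four]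
  -- An identity in `𝔽₂[t₀, t₁, t₂, t₃]`, now that `t₄` is eliminated.
  grind

end CharTwo

lemma Q_eq_prod_even_subsets :
    Q = ∏ s ∈ (univ : Finset (Fin 5)).powerset with Even #s, (1 + ∑ i ∈ s, X i) := by
  have even_subsets : {s ∈ (univ : Finset (Fin 5)).powerset | Even #s} =
      powersetCard 0 univ ∪ powersetCard 2 univ ∪ powersetCard 4 univ := by decide
  have pairs : ∏ p : Fin 5 × Fin 5 with p.1 < p.2,
      (1 + X p.1 + X p.2 : MvPolynomial (Fin 5) (ZMod 2)) =
        ∏ s ∈ univ.powersetCard 2, (1 + ∑ i ∈ s, X i) := by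
    rw [← prod_lt_pairs_eq_prod_powersetCard_two]
    refine prod_congr rfl fun p hp => ?_
    rw [sum_pair (mem_filter_univ _ |>.1 hp).ne, add_assoc]
  rw [Q, pairs, even_subsets, prod_union (by decide), prod_union (by decide)]
  simp

lemma Q_eq_prod_powerset :
    Q = ∏ s ∈ ({0, 1, 2, 3} : Finset (Fin 5)).powerset, (1 + ∑ i ∈ s, (X i + X 4)) := by
  have univ_eq : (univ : Finset (Fin 5)) = insert 4 {0, 1, 2, 3} := by decide
  rw [Q_eq_prod_even_subsets, univ_eq, prod_even_subsets_insert (by decide) X (1 + ·)]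

lemma homogeneousComponent_eight_Q :
    homogeneousComponent 8 Q =
      (spanPoly {0, 1, 2, 3} fun i : Fin 5 =>
        (X i + X 4 : MvPolynomial (Fin 5) (ZMod 2))).coeff 8 := by
  rw [Q_eq_prod_powerset, homogeneousComponent_prod_one_add_eq_coeff]
  · rfl
  · exact fun s _ => IsHomogeneous.sum _ _ _ fun i _ =>
      (isHomogeneous_X _ i).add (isHomogeneous_X _ 4)
  · decide

lemma aeval_homogeneousComponent_eight_Q {A : Type*} [CommRing A] [Algebra (ZMod 2) A]
    (t : Fin 5 → A) (ht : ∑ i, t i = 0) :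
    aeval t (homogeneousComponent 8 Q) = aeval t (e 3 * e 5 + e 4 ^ 2 + e 2 ^ 4) := by
  nontriviality A
  have : CharP A 2 := charP_of_injective_algebraMap (algebraMap (ZMod 2) A).injective 2
  have aeval_e (n : ℕ) : aeval t (e n) = (univ.val.map t).esymm n :=
    aeval_esymm_eq_multiset_esymm _ _ n t
  calc aeval t (homogeneousComponent 8 Q)
      = (spanPoly {0, 1, 2, 3} fun i => t i + t 4).coeff 8 := by
        rw [homogeneousComponent_eight_Q, ← AlgHom.coe_toRingHom, ← Polynomial.coeff_map,
          map_spanPoly]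
        simp only [AlgHom.coe_toRingHom, map_add, aeval_X]
    _ = aeval t (e 3 * e 5 + e 4 ^ 2 + e 2 ^ 4) := by
        simp only [coeff_eight_spanPoly_eq_esymm t ht, map_add, map_mul, map_pow, aeval_e]

/-- the degree-8 homogeneous component of `Q` is congruent to
`e₃e₅ + e₄² + e₂⁴` modulo the ideal `(e₁)`. -/
theorem c8_spinrep_SU5 :
    homogeneousComponent 8 Q - (e 3 * e 5 + e 4 ^ 2 + e 2 ^ 4)
      ∈ Ideal.span {e 1} := by
  let π := Ideal.Quotient.mkₐ (ZMod 2) (Ideal.span {e 1})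
  have sum_eq_zero : ∑ i, π (X i) = 0 := by
    rw [← map_sum, ← esymm_one]
    exact Ideal.Quotient.eq_zero_iff_mem.2 (Ideal.mem_span_singleton_self _)
  have π_eq_aeval : π = aeval (π ∘ X) := aeval_unique π
  rw [← Ideal.Quotient.eq]
  change π _ = π _
  rw [π_eq_aeval]
  exact aeval_homogeneousComponent_eight_Q _ sum_eq_zero
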